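/- Let G be the CPDAG of the Markov equivalence class of a DAG, let X and Y be distinct nodes, and let p be a possibly directed path from X to Y in G whose number of edges is minimal among all possibly directed paths from X to Y in G. Then p is unshielded. -/

import Mathlib

/-- A directed acyclic graph on node set `V`: a directed edge relation with no
directed cycles (no edge `a → b` together with a directed path from `b` back to `a`). -/
structure Dag (V : Type*) where
  edge : V → V → Prop
  acyclic : ∀ a b : V, edge a b → ¬ Relation.ReflTransGen edge b a

variable {V : Type*}

namespace Dag

/-- `a` is an ancestor of `b` (equivalently, `b` is a descendant of `a`):
there is a directed path from `a` to `b`; every node is its own ancestor. -/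
def Anc (D : Dag V) (a b : V) : Prop := Relation.ReflTransGen D.edge a b

/-- `a` and `b` are adjacent (joined by an edge in either direction). -/
def Adj (D : Dag V) (a b : V) : Prop := D.edge a b ∨ D.edge b a

/-- The parents of `x` in the DAG `D`. -/
def Pa (D : Dag V) (x : V) : Set V := {a | D.edge a x}

/-- The Markov blanket of `x`: parents, children, and parents of children of `x`
(excluding `x` itself). -/
def MB (D : Dag V) (x : V) : Set V :=
  {v | v ≠ x ∧ (D.edge v x ∨ D.edge x v ∨ ∃ c : V, D.edge x c ∧ D.edge v c)}

end Dag

/-- A path between `x` and `y` with respect to an adjacency relation `A`: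
a sequence of distinct nodes, starting at `x` and ending at `y`, in which
consecutive nodes are adjacent. `n` is the number of edges of the path. -/
structure GPath (A : V → V → Prop) (x y : V) where
  n : ℕ
  f : Fin (n + 1) → V
  inj : Function.Injective f
  first : f ⟨0, by omega⟩ = x
  last : f ⟨n, by omega⟩ = y
  adj : ∀ i : Fin n, A (f i.castSucc) (f i.succ)

namespace GPath

/-- The non-endpoint node at position `i` of the path `p` is a collider with respect
to the directed edge relation `E`: both incident edges of the path point into it. -/
def ColliderAt {A : V → V → Prop} {x y : V} (p : GPath A x y)
    (E : V → V → Prop) (i : ℕ) : Prop :=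
  ∃ (_ : 0 < i) (_ : i < p.n),
    E (p.f ⟨i - 1, by omega⟩) (p.f ⟨i, by omega⟩) ∧
    E (p.f ⟨i + 1, by omega⟩) (p.f ⟨i, by omega⟩)

/-- The path `p` is blocked by the node set `S` in the DAG `D`: it contains a
non-collider that lies in `S`, or a collider such that neither the collider nor any
of its descendants lies in `S`. -/
def Blocked {A : V → V → Prop} {x y : V} (p : GPath A x y)
    (D : Dag V) (S : Set V) : Prop :=
  ∃ (i : ℕ) (_ : 0 < i) (_ : i < p.n),
    (¬ p.ColliderAt D.edge i ∧ p.f ⟨i, by omega⟩ ∈ S) ∨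
    (p.ColliderAt D.edge i ∧ ∀ d : V, D.Anc (p.f ⟨i, by omega⟩) d → d ∉ S)

end GPath

namespace Dag

/-- `x` and `y` are d-separated by `S` in the DAG `D`: every path between `x` and `y`
is blocked by `S`. -/
def dSep (D : Dag V) (x y : V) (S : Set V) : Prop :=
  ∀ p : GPath D.Adj x y, p.Blocked D S

/-- Two DAGs on the same node set are Markov equivalent if they have exactly the same
d-separation relations. -/
def MEquiv (D D' : Dag V) : Prop :=
  ∀ (x y : V) (S : Set V), D.dSep x y S ↔ D'.dSep x y S

/-- The edge between `a` and `b` is directed `a → b` in the CPDAG of the Markov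
equivalence class of `D`: the edge `a → b` holds in every DAG Markov equivalent to `D`. -/
def CpDir (D : Dag V) (a b : V) : Prop :=
  ∀ D' : Dag V, D.MEquiv D' → D'.edge a b

/-- The edge between `a` and `b` is undirected (`a − b`) in the CPDAG: `a` and `b` are
adjacent (the CPDAG has the same adjacencies as the DAGs of the MEC) but the edge is not
directed either way in the CPDAG. -/
def CpUndir (D : Dag V) (a b : V) : Prop :=
  D.Adj a b ∧ ¬ D.CpDir a b ∧ ¬ D.CpDir b a

/-- `Pa_G(a)`: the nodes with a directed edge into `a` in the CPDAG. -/
def CpPa (D : Dag V) (a : V) : Set V := {p | D.CpDir p a}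

/-- `Ch_G(a)`: the nodes `b` with the edge directed `a → b` in the CPDAG. -/
def CpCh (D : Dag V) (a : V) : Set V := {c | D.CpDir a c}

/-- `Sib_G(a)`: the nodes joined to `a` by an undirected edge in the CPDAG. -/
def CpSib (D : Dag V) (a : V) : Set V := {s | D.CpUndir a s}

end Dag

namespace GPath

/-- `p` is a possibly directed path in the CPDAG: no edge on it is directed
backwards (as `V_i ← V_{i+1}`) in the CPDAG. -/
def CpPossiblyDirected {D : Dag V} {x y : V} (p : GPath D.Adj x y) : Prop :=
  ∀ i : Fin p.n, ¬ D.CpDir (p.f i.succ) (p.f i.castSucc)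

/-- `p` is a (fully) directed path in the CPDAG: every edge on it is directed
forwards in the CPDAG. -/
def CpDirected {D : Dag V} {x y : V} (p : GPath D.Adj x y) : Prop :=
  ∀ i : Fin p.n, D.CpDir (p.f i.castSucc) (p.f i.succ)

/-- `p` is a directed path from `x` to `y` in the DAG `D` itself. -/
def DirectedIn {D : Dag V} {x y : V} (p : GPath D.Adj x y) : Prop :=
  ∀ i : Fin p.n, D.edge (p.f i.castSucc) (p.f i.succ)

/-- `p` is unshielded: for every three consecutive nodes on it, the first and the
third are non-adjacent. -/
def Unshielded {D : Dag V} {x y : V} (p : GPath D.Adj x y) : Prop :=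
  ∀ (i : ℕ) (_ : i + 2 ≤ p.n), ¬ D.Adj (p.f ⟨i, by omega⟩) (p.f ⟨i + 2, by omega⟩)

end GPath

namespace Dag

/-- `x` is a possible ancestor of `y` in the CPDAG: there is a possibly directed path
from `x` to `y`. -/
def PossAn (D : Dag V) (x y : V) : Prop :=
  ∃ p : GPath D.Adj x y, p.CpPossiblyDirected

/-- `x` is an explicit ancestor of `y` in the CPDAG: there is a fully directed path
from `x` to `y` in the CPDAG. -/
def ExplAn (D : Dag V) (x y : V) : Prop :=
  ∃ p : GPath D.Adj x y, p.CpDirected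

/-- The CPDAG is amenable relative to `(x, y)`: every possibly directed path from
`x` to `y` starts with a directed edge out of `x`. -/
def Amenable (D : Dag V) (x y : V) : Prop :=
  ∀ p : GPath D.Adj x y, p.CpPossiblyDirected →
    ∀ _ : 0 < p.n, D.CpDir (p.f ⟨0, by omega⟩) (p.f ⟨1, by omega⟩)

/-- `S` is a valid adjustment set for `(x, y)` in the DAG `D`:
(i) no element of `S` is a descendant of any node `w ≠ x` lying on a directed path
from `x` to `y`, and (ii) every path between `x` and `y` that is not a directed path
from `x` to `y` is blocked by `S`. -/
def ValidAdjustment (D : Dag V) (x y : V) (S : Set V) : Prop :=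
  (∀ s ∈ S, ∀ w : V, w ≠ x → D.Anc x w → D.Anc w y → ¬ D.Anc w s) ∧
  (∀ p : GPath D.Adj x y, ¬ p.DirectedIn → p.Blocked D S)

/-- `Cn_D(x, y)`: the nodes `w ≠ x` lying on some directed path from `x` to `y` in `D`. -/
def Cn (D : Dag V) (x y : V) : Set V := {w | w ≠ x ∧ D.Anc x w ∧ D.Anc w y}

end Dag

/-!
If `a`, `b`, `c` are consecutive on `p` and `a`, `c` are adjacent, then either `c → a` is directed
in the CPDAG, or omitting `b` leaves a shorter possibly directed path. In the first case `c → b` is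
directed too, and `p` is not possibly directed. If `a → b` is directed, this is clear; if `a − b`
is undirected, it is the property of CPDAGs that `c → a − b` implies `c → b`.

That property is obtained without orientation rules. The edges of a member of the class between the
nodes of an ancestral set may be reoriented as in any other member, because this changes neither
adjacencies nor v-structures. Hence a member with as few ancestors of a given node as possible has
only compelled edges into that node, and there are members `D'` and `E` of the class such that `b`
has only compelled parents in `D'`, `a` has only compelled parents in `E`, and `E` agrees with `D'`
on the ancestors of `a`. Were there some `c` with `c → a` but not `c → b` directed, then for the
last such `c` in `E` the edge `c → a` would be covered in `E`. A covered edge can be reversed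
without leaving the class, so `c → a` would not be compelled after all.
-/

open Relation

namespace Dag

variable {D D' : Dag V} {S : Set V} {a b c u v w x y z : V}

theorem edge_irrefl (D : Dag V) (a : V) : ¬ D.edge a a := fun h => D.acyclic a a h .refl

theorem edge_asymm (h : D.edge a b) : ¬ D.edge b a := fun h' => D.acyclic a b h (.single h')

theorem edge_of_anc_of_adj (h : D.Anc a b) (hadj : D.Adj a b) : D.edge a b :=
  hadj.resolve_right fun hba => D.acyclic b a hba h

theorem edge_trans_of_adj (hab : D.edge a b) (hbc : D.edge b c) (hac : D.Adj a c) : D.edge a c :=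
  edge_of_anc_of_adj (.head hab (.single hbc)) hac

theorem Adj.symm (h : D.Adj a b) : D.Adj b a := Or.symm h

theorem Adj.ne (h : D.Adj a b) : a ≠ b := by
  rintro rfl
  exact h.elim (D.edge_irrefl a) (D.edge_irrefl a)

theorem not_transGen_edge_self (D : Dag V) (a : V) : ¬ TransGen D.edge a a := fun h =>
  have ⟨b, hab, hba⟩ := TransGen.head'_iff.1 h
  D.acyclic a b hab hba

theorem wellFounded_edge [Finite V] (D : Dag V) : WellFounded D.edge :=
  have : Std.Irrefl (TransGen D.edge) := ⟨D.not_transGen_edge_self⟩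
  Subrelation.wf .single (Finite.wellFounded_of_trans_of_irrefl (TransGen D.edge))

theorem wellFounded_swap_edge [Finite V] (D : Dag V) : WellFounded (Function.swap D.edge) :=
  have : Std.Irrefl (TransGen (Function.swap D.edge)) :=
    ⟨fun a h => D.not_transGen_edge_self a (transGen_swap.1 h)⟩
  Subrelation.wf .single (Finite.wellFounded_of_trans_of_irrefl (TransGen (Function.swap D.edge)))

/-- The ancestors of a node set. -/
def ancestors (D : Dag V) (S : Set V) : Set V := {v | ∃ d ∈ S, D.Anc v d}

theorem mem_ancestors_of_mem (h : a ∈ S) : a ∈ D.ancestors S := ⟨a, h, .refl⟩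

theorem mem_ancestors_of_edge (hab : D.edge a b) (hb : b ∈ D.ancestors S) : a ∈ D.ancestors S :=
  have ⟨d, hd, hbd⟩ := hb
  ⟨d, hd, .head hab hbd⟩

/-! ### d-separation and the Bayes ball -/

/-- The two ways in which the ball of `Dag.BayesBall` may leave a node: `down`, to a child, or
`up`, to a parent. -/
inductive Heading
  | down
  | up

/-- Shachter's Bayes ball started at `x`: `D.BayesBall S x w h` says that the ball can get to `w`
and leave it with heading `h`. The ball follows walks on which a node is a collider exactly if it
lies in `S`; in contrast to the open paths of d-separation, no descendants enter this condition, a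
ball that meets a collider with a descendant in `S` being sent down to `S` and back. -/
inductive BayesBall (D : Dag V) (S : Set V) (x : V) : V → Heading → Prop
  | start (h : Heading) : BayesBall D S x x h
  | pass {v w : V} : BayesBall D S x v .down → D.edge v w → w ∉ S → BayesBall D S x w .down
  | bounce {v w : V} : BayesBall D S x v .down → D.edge v w → w ∈ S → BayesBall D S x w .up
  | ascend {v w : V} (h : Heading) :
      BayesBall D S x v .up → D.edge w v → w ∉ S → BayesBall D S x w h

/-- `D.Leaves h v w`: a ball that leaves `v` with heading `h` can move to `w`. -/
def Leaves (D : Dag V) : Heading → V → V → Prop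
  | .down, v, w => D.edge v w
  | .up, v, w => D.edge w v

theorem Leaves.adj {h : Heading} (hvw : D.Leaves h v w) : D.Adj v w := by
  cases h
  exacts [.inl hvw, .inr hvw]

/-- The Bayes ball started at `x` arrives at `y`. -/
def BallReaches (D : Dag V) (S : Set V) (x y : V) : Prop :=
  x = y ∨ ∃ v h, D.BayesBall S x v h ∧ D.Leaves h v y

theorem BayesBall.ballReaches {h : Heading} (hw : D.BayesBall S x w h) : D.BallReaches S x w := by
  cases hw with
  | start => exact .inl rfl
  | pass hv hvw _ => exact .inr ⟨_, .down, hv, hvw⟩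
  | bounce hv hvw _ => exact .inr ⟨_, .down, hv, hvw⟩
  | ascend _ hv hwv _ => exact .inr ⟨_, .up, hv, hwv⟩

theorem BayesBall.up_of_mem_ancestors (hv : D.BayesBall S x v .down) (hvw : D.edge v w)
    (hw : w ∈ D.ancestors S) : D.BayesBall S x w .up := by
  obtain ⟨d, hd, hwd⟩ := hw
  induction hwd using ReflTransGen.head_induction_on generalizing v with
  | refl => exact .bounce hv hvw hd
  | @head w t hwt _ ih =>
    by_cases hw : w ∈ S
    · exact .bounce hv hvw hw
    · exact .ascend .up (ih (.pass hv hvw hw) hwt) hwt hw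

/-- The condition under which, given `S`, the node `b` does not block a path on which `a`, `b` and
`c` are consecutive. -/
def Passable (D : Dag V) (S : Set V) (a b c : V) : Prop :=
  (D.edge a b ∧ D.edge c b → b ∈ D.ancestors S) ∧ (¬ (D.edge a b ∧ D.edge c b) → b ∉ S)

theorem passable_iff_of_edge_right (hbc : D.edge b c) : D.Passable S a b c ↔ b ∉ S := by
  simp [Passable, edge_asymm hbc]

theorem passable_iff_of_edge_left (hba : D.edge b a) : D.Passable S a b c ↔ b ∉ S := by
  simp [Passable, edge_asymm hba]

theorem passable_iff_of_collider (hab : D.edge a b) (hcb : D.edge c b) :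
    D.Passable S a b c ↔ b ∈ D.ancestors S := by
  simp [Passable, hab, hcb]

/-- `f 0, …, f n` is a path from `x` to `y` that `S` does not block. Unlike for `GPath`, the nodes
are given by a function on `ℕ` (irrelevant beyond `n`), so that an initial segment of the path is
described by the same `f`. -/
structure OpenPath (D : Dag V) (S : Set V) (x y : V) (n : ℕ) (f : ℕ → V) : Prop where
  injOn : Set.InjOn f (Set.Iic n)
  zero : f 0 = x
  last : f n = y
  adj : ∀ i < n, D.Adj (f i) (f (i + 1))
  passable : ∀ i, i + 2 ≤ n → D.Passable S (f i) (f (i + 1)) (f (i + 2))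

theorem not_blocked_iff_forall_passable {A : V → V → Prop} (p : GPath A x y) :
    ¬ p.Blocked D S ↔ ∀ i (hi : i + 2 ≤ p.n),
      D.Passable S (p.f ⟨i, by omega⟩) (p.f ⟨i + 1, by omega⟩) (p.f ⟨i + 2, by omega⟩) := by
  constructor
  · intro hp i hi
    refine ⟨fun hcol => ?_, fun hcol hS => ?_⟩
    · by_contra hanc
      exact hp ⟨i + 1, by omega, hi, .inr ⟨⟨by omega, hi, hcol⟩, fun d hd hdS =>
        hanc ⟨d, hdS, hd⟩⟩⟩
    · exact hp ⟨i + 1, by omega, hi, .inl ⟨fun ⟨_, _, h⟩ => hcol h, hS⟩⟩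
  · rintro hp ⟨i, hi, hin, h⟩
    obtain ⟨i, rfl⟩ := Nat.exists_eq_add_of_le' hi
    rcases h with ⟨hcol, hS⟩ | ⟨⟨_, _, hcol⟩, hS⟩
    · exact (hp i hin).2 (fun h => hcol ⟨hi, hin, h⟩) hS
    · obtain ⟨d, hdS, hd⟩ := (hp i hin).1 hcol
      exact hS d hd hdS

theorem dSep_iff_forall_not_openPath :
    D.dSep x y S ↔ ∀ n f, ¬ D.OpenPath S x y n f := by
  constructor
  · intro hsep n f hf
    let p : GPath D.Adj x y :=
      { n := n
        f := fun i => f i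
        inj := fun i j hij => Fin.ext (hf.injOn (Nat.lt_succ_iff.1 i.2) (Nat.lt_succ_iff.1 j.2) hij)
        first := hf.zero
        last := hf.last
        adj := fun i => hf.adj i i.2 }
    exact (not_blocked_iff_forall_passable p).2 hf.passable (hsep p)
  · intro hopen p
    by_contra hp
    have hp := (not_blocked_iff_forall_passable p).1 hp
    have hofNat : ∀ i (hi : i < p.n + 1), Fin.ofNat (p.n + 1) i = ⟨i, hi⟩ := fun i hi =>
      Fin.ext (Nat.mod_eq_of_lt hi)
    refine hopen p.n (fun i => p.f (Fin.ofNat (p.n + 1) i)) ⟨?_, p.first, ?_, ?_, ?_⟩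
    · intro i hi j hj hij
      have := p.inj hij
      rw [hofNat i (Nat.lt_succ_of_le hi), hofNat j (Nat.lt_succ_of_le hj)] at this
      exact congrArg Fin.val this
    · simp only [hofNat p.n p.n.lt_succ_self, p.last]
    · intro i hi
      simp only [hofNat i (by omega), hofNat (i + 1) (by omega)]
      exact p.adj ⟨i, hi⟩
    · intro i hi
      simp only [hofNat i (by omega), hofNat (i + 1) (by omega), hofNat (i + 2) (by omega)]
      exact hp i hi

namespace OpenPath

variable {n i : ℕ} {f : ℕ → V}

theorem refl (D : Dag V) (S : Set V) (x : V) : D.OpenPath S x x 0 fun _ => x where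
  injOn i hi j hj _ := by rw [Nat.le_zero.1 hi, Nat.le_zero.1 hj]
  zero := rfl
  last := rfl
  adj i hi := absurd hi i.not_lt_zero
  passable i hi := absurd hi (by omega)

theorem take (hf : D.OpenPath S x v n f) (hi : i ≤ n) : D.OpenPath S x (f i) i f where
  injOn := hf.injOn.mono (Set.Iic_subset_Iic.2 hi)
  zero := hf.zero
  last := rfl
  adj j hj := hf.adj j (by omega)
  passable j hj := hf.passable j (by omega)

theorem snoc (hf : D.OpenPath S x v n f) (hvw : D.Adj v w) (hw : ∀ i ≤ n, f i ≠ w)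
    (hpass : ∀ m, n = m + 1 → D.Passable S (f m) v w) :
    D.OpenPath S x w (n + 1) (Function.update f (n + 1) w) := by
  have hold : ∀ i ≤ n, Function.update f (n + 1) w i = f i := fun i hi =>
    Function.update_of_ne (by omega) _ _
  have hnew : Function.update f (n + 1) w (n + 1) = w := Function.update_self _ _ _
  refine ⟨?_, (hold 0 n.zero_le).trans hf.zero, hnew, fun i hi => ?_, fun i hi => ?_⟩
  · intro i hi j hj hij
    rcases Nat.le_succ_iff.1 hi with hi | rfl <;> rcases Nat.le_succ_iff.1 hj with hj | rfl
    · rw [hold i hi, hold j hj] at hij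
      exact hf.injOn hi hj hij
    · rw [hold i hi, hnew] at hij
      exact absurd hij (hw i hi)
    · rw [hold j hj, hnew] at hij
      exact absurd hij.symm (hw j hj)
    · rfl
  · rcases Nat.lt_succ_iff_lt_or_eq.1 hi with hi | rfl
    · rw [hold i hi.le, hold (i + 1) hi]
      exact hf.adj i hi
    · rw [hold i le_rfl, hnew, hf.last]
      exact hvw
  · rw [hold i (by omega), hold (i + 1) (by omega)]
    rcases Nat.le_succ_iff.1 hi with hi | hi
    · rw [hold (i + 2) hi]
      exact hf.passable i hi
    · obtain rfl : n = i + 1 := by omega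
      rw [hnew, hf.last]
      exact hpass i rfl

theorem bayesBall (hf : D.OpenPath S x y n f) (hi : i < n) :
    (D.edge (f i) (f (i + 1)) → D.BayesBall S x (f i) .down) ∧
      (D.edge (f (i + 1)) (f i) → D.BayesBall S x (f i) .up) := by
  induction i with
  | zero => rw [hf.zero]; exact ⟨fun _ => .start _, fun _ => .start _⟩
  | succ i ih =>
    have ⟨hdown, hup⟩ := ih (by omega)
    have hpass := hf.passable i hi
    rcases hf.adj i (by omega) with hin | hin
    · refine ⟨fun hout => ?_, fun hout => ?_⟩
      · exact .pass (hdown hin) hin ((passable_iff_of_edge_right hout).1 hpass)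
      · exact (hdown hin).up_of_mem_ancestors hin ((passable_iff_of_collider hin hout).1 hpass)
    · have hS := (passable_iff_of_edge_left hin).1 hpass
      exact ⟨fun _ => .ascend _ (hup hin) hin hS, fun _ => .ascend _ (hup hin) hin hS⟩

theorem ballReaches (hf : D.OpenPath S x y n f) : D.BallReaches S x y := by
  cases n with
  | zero => exact .inl (hf.zero.symm.trans hf.last)
  | succ m =>
    have ⟨hdown, hup⟩ := hf.bayesBall m.lt_succ_self
    rw [hf.last] at hdown hup
    rcases hf.last ▸ hf.adj m m.lt_succ_self with h | h
    · exact .inr ⟨_, .down, hdown h, h⟩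
    · exact .inr ⟨_, .up, hup h, h⟩

theorem extend (hf : D.OpenPath S x v n f) (hvw : D.Adj v w)
    (hpass : ∀ m, n = m + 1 → D.Passable S (f m) v w) :
    ∃ k g, D.OpenPath S x w k g ∧
      ∀ m, k = m + 1 → g m = v ∨ m + 1 < n ∧ g = f ∧ f (m + 1) = w := by
  by_cases hw : ∃ i ≤ n, f i = w
  · obtain ⟨i, hi, rfl⟩ := hw
    refine ⟨i, f, hf.take hi, fun m hm => .inr ⟨?_, rfl, by rw [hm]⟩⟩
    have hin : i ≠ n := fun h => hvw.ne (hf.last ▸ h ▸ rfl)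
    omega
  · push Not at hw
    refine ⟨n + 1, _, hf.snoc hvw hw hpass, fun m hm => .inl ?_⟩
    obtain rfl : n = m := by omega
    rw [Function.update_of_ne (by omega), hf.last]

theorem succ_mem_ancestors (hf : D.OpenPath S x v n f) (hwv : D.edge w v)
    (hpass : ∀ m, n = m + 1 → D.Passable S (f m) v w) (hi : i < n)
    (hedge : D.edge (f i) (f (i + 1))) : f (i + 1) ∈ D.ancestors S := by
  induction hk : n - i generalizing i with
  | zero => omega
  | succ k ih =>
    rcases Nat.lt_or_ge (i + 1) n with hin | hin
    · rcases hf.adj (i + 1) hin with hout | hout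
      · exact mem_ancestors_of_edge hout (ih hin hout (by omega))
      · exact (passable_iff_of_collider hedge hout).1 (hf.passable i hin)
    · obtain rfl : n = i + 1 := by omega
      rw [hf.last] at hedge ⊢
      exact (passable_iff_of_collider hedge hwv).1 (hpass i rfl)

end OpenPath

theorem BayesBall.exists_openPath {h : Heading} (hv : D.BayesBall S x v h) :
    ∃ n f, D.OpenPath S x v n f ∧
      ∀ w, D.Leaves h v w → ∀ m, n = m + 1 → D.Passable S (f m) v w := by
  induction hv with
  | start => exact ⟨0, _, .refl D S x, fun _ _ m hm => absurd hm m.succ_ne_zero.symm⟩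
  | @pass v w _ hvw hw ih =>
    obtain ⟨n, f, hf, hpass⟩ := ih
    obtain ⟨k, g, hg, -⟩ := hf.extend (.inl hvw) (hpass w hvw)
    exact ⟨k, g, hg, fun u hwu m _ => (passable_iff_of_edge_right hwu).2 hw⟩
  | @bounce v w _ hvw hw ih =>
    obtain ⟨n, f, hf, hpass⟩ := ih
    obtain ⟨k, g, hg, hgk⟩ := hf.extend (.inl hvw) (hpass w hvw)
    refine ⟨k, g, hg, fun u huw m hm => ?_⟩
    have hmw : D.edge (g m) w := by
      obtain hgm | ⟨hmn, rfl, rfl⟩ := hgk m hm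
      · rwa [hgm]
      · exact (hf.adj m (by omega)).resolve_right fun h =>
          (passable_iff_of_edge_left h).1 (hf.passable m hmn) hw
    exact (passable_iff_of_collider hmw huw).2 (mem_ancestors_of_mem hw)
  | @ascend v w h _ hwv hw ih =>
    obtain ⟨n, f, hf, hpass⟩ := ih
    obtain ⟨k, g, hg, hgk⟩ := hf.extend (.inr hwv) (hpass w hwv)
    refine ⟨k, g, hg, fun u huw m hm => ⟨fun hcol => ?_, fun _ => hw⟩⟩
    obtain hgm | ⟨hmn, rfl, rfl⟩ := hgk m hm
    · exact absurd hwv (edge_asymm (hgm ▸ hcol.1))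
    · exact hf.succ_mem_ancestors hwv (hpass _ hwv) (by omega) hcol.1

theorem dSep_iff_not_ballReaches : D.dSep x y S ↔ ¬ D.BallReaches S x y := by
  rw [dSep_iff_forall_not_openPath]
  refine ⟨?_, fun hball n f hf => hball hf.ballReaches⟩
  rintro hopen (rfl | ⟨v, h, hv, hvy⟩)
  · exact hopen 0 _ (.refl D S x)
  · obtain ⟨n, f, hf, hpass⟩ := hv.exists_openPath
    obtain ⟨k, g, hg, -⟩ := hf.extend hvy.adj (hpass y hvy)
    exact hopen k g hg

/-! ### Adjacencies and v-structures -/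

theorem BayesBall.anc_of_pa {h : Heading} (hv : D.BayesBall (D.Pa a) a v h) :
    D.Anc a v ∧ (h = .up → v = a) := by
  induction hv with
  | start => exact ⟨.refl, fun _ => rfl⟩
  | pass _ hvw _ ih => exact ⟨.tail ih.1 hvw, nofun⟩
  | @bounce v w _ hvw hw ih => exact absurd (.tail ih.1 hvw) (D.acyclic w a hw)
  | ascend _ _ hwv hw ih => exact absurd (ih.2 rfl ▸ hwv) hw

theorem dSep_pa (hne : a ≠ c) (hadj : ¬ D.Adj a c) (hanc : ¬ D.Anc a c) :
    D.dSep a c (D.Pa a) := by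
  rw [dSep_iff_not_ballReaches]
  rintro (rfl | ⟨v, _ | _, hv, hvc⟩)
  · exact hne rfl
  · exact hanc (.tail hv.anc_of_pa.1 hvc)
  · obtain rfl := hv.anc_of_pa.2 rfl
    exact hadj (.inr hvc)

theorem not_dSep_of_adj (hadj : D.Adj a b) : ¬ D.dSep a b S := by
  rw [dSep_iff_not_ballReaches, not_not]
  exact hadj.elim (fun h => .inr ⟨a, .down, .start _, h⟩) fun h => .inr ⟨a, .up, .start _, h⟩

theorem edge_and_edge_of_dSep (hsep : D.dSep a c S) (hb : b ∉ S) (hab : D.Adj a b)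
    (hbc : D.Adj b c) : D.edge a b ∧ D.edge c b := by
  rw [dSep_iff_not_ballReaches] at hsep
  have hdown : D.BayesBall S a b .down :=
    hab.elim (fun h => .pass (.start _) h hb) fun h => .ascend _ (.start _) h hb
  have hcb : D.edge c b := hbc.resolve_left fun h => hsep (.inr ⟨b, .down, hdown, h⟩)
  refine ⟨hab.resolve_right fun h => ?_, hcb⟩
  exact hsep (.inr ⟨b, .up, .ascend _ (.start _) h hb, hcb⟩)

theorem notMem_of_edge_of_edge_of_dSep (hsep : D.dSep a c S) (hab : D.edge a b)
    (hcb : D.edge c b) : b ∉ S := fun hb =>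
  dSep_iff_not_ballReaches.1 hsep (.inr ⟨b, .up, .bounce (.start _) hab hb, hcb⟩)

theorem adj_iff_forall_not_dSep (hne : a ≠ c) :
    D.Adj a c ↔ ∀ S, ¬ D.dSep a c S ∧ ¬ D.dSep c a S := by
  refine ⟨fun h S => ⟨not_dSep_of_adj h, not_dSep_of_adj h.symm⟩, fun h => ?_⟩
  by_contra hadj
  by_cases hanc : D.Anc a c
  · have hca : ¬ D.Anc c a := fun hca => by
      obtain heq | ⟨b, hab, hbc⟩ := ReflTransGen.cases_head hanc
      · exact hne heq
      · exact D.acyclic a b hab (hbc.trans hca)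
    exact (h (D.Pa c)).2 (dSep_pa hne.symm (fun h' => hadj h'.symm) hca)
  · exact (h (D.Pa a)).1 (dSep_pa hne hadj hanc)

/-- The v-structure (unshielded collider) `a → b ← c`. -/
structure VStructure (D : Dag V) (a b c : V) : Prop where
  left : D.edge a b
  right : D.edge c b
  ne : a ≠ c
  not_adj : ¬ D.Adj a c

theorem VStructure.symm (h : D.VStructure a b c) : D.VStructure c b a :=
  ⟨h.right, h.left, h.ne.symm, fun hadj => h.not_adj hadj.symm⟩

/-- `D` and `D'` have the same adjacencies and the same v-structures. -/
structure SamePattern (D D' : Dag V) : Prop where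
  adj_iff : ∀ a b, D.Adj a b ↔ D'.Adj a b
  vStructure_iff : ∀ a b c, D.VStructure a b c ↔ D'.VStructure a b c

theorem SamePattern.symm (h : D.SamePattern D') : D'.SamePattern D :=
  ⟨fun a b => (h.adj_iff a b).symm, fun a b c => (h.vStructure_iff a b c).symm⟩

theorem SamePattern.trans {D'' : Dag V} (h : D.SamePattern D') (h' : D'.SamePattern D'') :
    D.SamePattern D'' :=
  ⟨fun a b => (h.adj_iff a b).trans (h'.adj_iff a b),
    fun a b c => (h.vStructure_iff a b c).trans (h'.vStructure_iff a b c)⟩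

namespace MEquiv

theorem refl (D : Dag V) : D.MEquiv D := fun _ _ _ => .rfl

theorem symm (h : D.MEquiv D') : D'.MEquiv D := fun x y S => (h x y S).symm

theorem trans {D'' : Dag V} (h : D.MEquiv D') (h' : D'.MEquiv D'') : D.MEquiv D'' :=
  fun x y S => (h x y S).trans (h' x y S)

theorem adj_iff (h : D.MEquiv D') (a b : V) : D.Adj a b ↔ D'.Adj a b := by
  obtain rfl | hne := eq_or_ne a b
  · exact ⟨fun hadj => absurd rfl hadj.ne, fun hadj => absurd rfl hadj.ne⟩
  · simp only [adj_iff_forall_not_dSep hne, h a b, h b a]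

theorem vStructure (h : D.MEquiv D') (hv : D.VStructure a b c) : D'.VStructure a b c := by
  wlog hsep : ∃ S, D.dSep a c S generalizing a c
  · have hnadj := (adj_iff_forall_not_dSep hv.ne).not.1 hv.not_adj
    push Not at hnadj
    obtain ⟨S, hS⟩ := hnadj
    exact (this hv.symm ⟨S, hS fun hac => hsep ⟨S, hac⟩⟩).symm
  obtain ⟨S, hS⟩ := hsep
  have ⟨hab, hcb⟩ := edge_and_edge_of_dSep ((h a c S).1 hS)
    (notMem_of_edge_of_edge_of_dSep hS hv.left hv.right)
    ((h.adj_iff a b).1 (.inl hv.left)) ((h.adj_iff b c).1 (.inr hv.right))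
  exact ⟨hab, hcb, hv.ne, fun hac => hv.not_adj ((h.adj_iff a c).2 hac)⟩

theorem samePattern (h : D.MEquiv D') : D.SamePattern D' :=
  ⟨h.adj_iff, fun _ _ _ => ⟨h.vStructure, h.symm.vStructure⟩⟩

end MEquiv

/-! ### Covered edges -/

/-- The edge `u → v` is covered (Chickering): the parents of `v` are `u` and the parents of `u`.
These are the edges that can be reversed without leaving the Markov equivalence class. -/
def Covered (D : Dag V) (u v : V) : Prop := ∀ z, D.edge z v ↔ z = u ∨ D.edge z u

/-- `D'` arises from `D` by reversing the covered edge `u → v`. -/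
structure IsCoveredReversal (D D' : Dag V) (u v : V) : Prop where
  covered : D.Covered u v
  edge_iff : ∀ a b, D'.edge a b ↔ (a = v ∧ b = u) ∨ (D.edge a b ∧ ¬ (a = u ∧ b = v))

namespace Covered

theorem edge (h : D.Covered u v) : D.edge u v := (h u).2 (.inl rfl)

theorem anc_tail (h : D.Covered u v) (hb : D.Anc b v) (hne : b ≠ v) : D.Anc b u := by
  obtain heq | ⟨p, hbp, hpv⟩ := ReflTransGen.cases_tail hb
  · exact absurd heq.symm hne
  · obtain rfl | hpu := (h p).1 hpv
    exacts [hbp, .tail hbp hpu]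

theorem exists_reversal (h : D.Covered u v) : ∃ D' : Dag V, D.IsCoveredReversal D' u v := by
  let E a b := (a = v ∧ b = u) ∨ (D.edge a b ∧ ¬ (a = u ∧ b = v))
  have anc_of_reflTransGen {w b : V} (hwb : ReflTransGen E w b) :
      D.Anc w b ∨ D.Anc w v ∧ D.Anc u b := by
    induction hwb using ReflTransGen.head_induction_on with
    | refl => exact .inl .refl
    | head hwt _ ih =>
      obtain ⟨rfl, rfl⟩ | ⟨hwt, -⟩ := hwt
      · exact .inr ⟨.refl, ih.elim id And.right⟩
      · exact ih.imp (.head hwt) (And.imp_left (.head hwt))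
  refine ⟨⟨E, ?_⟩, h, fun _ _ => .rfl⟩
  rintro a b (⟨rfl, rfl⟩ | ⟨hab, hne⟩) hba
  · obtain heq | ⟨w, ⟨heq, -⟩ | ⟨hbw, hwa⟩, hanc⟩ := ReflTransGen.cases_head hba
    · exact D.edge_irrefl b (heq ▸ h.edge)
    · exact D.edge_irrefl b (heq ▸ h.edge)
    · exact D.acyclic b w hbw
        (h.anc_tail ((anc_of_reflTransGen hanc).elim id And.left) fun hw => hwa ⟨rfl, hw⟩)
  · obtain hanc | ⟨hbv, hua⟩ := anc_of_reflTransGen hba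
    · exact D.acyclic a b hab hanc
    · obtain rfl | hbv' := eq_or_ne b v
      · exact D.acyclic a u (((h a).1 hab).resolve_left fun ha => hne ⟨ha, rfl⟩) hua
      · exact D.acyclic a b hab ((h.anc_tail hbv hbv').trans hua)

end Covered

namespace BayesBall

theorem down (hw : D.BayesBall S x w .up) (hwS : w ∉ S) : D.BayesBall S x w .down := by
  cases hw with
  | start => exact .start _
  | bounce _ _ hmem => exact absurd hmem hwS
  | ascend _ hv hwv _ => exact .ascend _ hv hwv hwS

theorem up_of_mem (hw : D.BayesBall S x w .down) (hwS : w ∈ S) : D.BayesBall S x w .up := by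
  cases hw with
  | start => exact .start _
  | pass _ _ hnmem => exact absurd hwS hnmem
  | ascend _ _ _ hnmem => exact absurd hwS hnmem

theorem exists_down_of_covered (h : D.Covered u v) (hu : D.BayesBall S x u .up) :
    ∃ w, D.BayesBall S x w .down ∧ D.edge w v := by
  cases hu with
  | start => exact ⟨_, .start _, h.edge⟩
  | bounce hw hwu _ => exact ⟨_, hw, (h _).2 (.inr hwu)⟩
  | ascend _ hw huw hu => exact ⟨_, .ascend _ hw huw hu, h.edge⟩

theorem cases_down_of_covered (h : D.Covered u v) (hv : D.BayesBall S x v .down) :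
    D.BayesBall S x v .up ∨ D.BayesBall S x u .down ∨
      ∃ w, D.BayesBall S x w .down ∧ D.edge w u := by
  cases hv with
  | start => exact .inl (.start _)
  | ascend _ hw hvw hv => exact .inl (.ascend _ hw hvw hv)
  | @pass w _ hw hwv hv =>
    obtain rfl | hwu := (h w).1 hwv
    exacts [.inr (.inl hw), .inr (.inr ⟨w, hw, hwu⟩)]

theorem down_of_covered (h : D.Covered u v) (hv : D.BayesBall S x v .down) (hu : u ∉ S) :
    D.BayesBall S x u .down := by
  obtain hv | hu' | ⟨w, hw, hwu⟩ := hv.cases_down_of_covered h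
  exacts [.ascend _ hv h.edge hu, hu', .pass hw hwu hu]

theorem up_of_covered (h : D.Covered u v) (hv : D.BayesBall S x v .down) (hu : u ∈ S) :
    D.BayesBall S x u .up ∨ D.BayesBall S x v .up := by
  obtain hv | hu' | ⟨w, hw, hwu⟩ := hv.cases_down_of_covered h
  exacts [.inr hv, .inl (hu'.up_of_mem hu), .inl (.bounce hw hwu hu)]

theorem ballReaches_of_covered (h : D.Covered u v) (hv : D.BayesBall S x v .down) :
    D.BallReaches S x u := by
  obtain hv | hu | ⟨w, hw, hwu⟩ := hv.cases_down_of_covered h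
  exacts [.inr ⟨v, .up, hv, h.edge⟩, hu.ballReaches, .inr ⟨w, .down, hw, hwu⟩]

end BayesBall

namespace IsCoveredReversal

theorem ne (h : D.IsCoveredReversal D' u v) : u ≠ v := fun heq =>
  D.edge_irrefl v (heq ▸ h.covered.edge)

theorem edge_of_edge (h : D.IsCoveredReversal D' u v)
    (hab : D.edge a b) (hne : ¬ (a = u ∧ b = v)) : D'.edge a b :=
  (h.edge_iff a b).2 (.inr ⟨hab, hne⟩)

theorem symm (h : D.IsCoveredReversal D' u v) : D'.IsCoveredReversal D v u := by
  have hne := h.ne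
  have hvu : ¬ D.edge v u := edge_asymm h.covered.edge
  refine ⟨fun z => ?_, fun a b => ?_⟩
  · have := h.covered z
    have := D.edge_irrefl u
    grind [h.edge_iff z u, h.edge_iff z v]
  · have := h.covered.edge
    grind [h.edge_iff a b]

theorem exists_up (h : D.IsCoveredReversal D' u v)
    (hw : D'.BayesBall S x w .up ∨ w = u ∧ D'.BayesBall S x v .up ∨
      w = v ∧ D'.BayesBall S x u .up) (hzw : D.edge z w) (hne : ¬ (z = u ∧ w = v)) :
    ∃ t, D'.BayesBall S x t .up ∧ D'.edge z t := by
  obtain hw | ⟨rfl, hv⟩ | ⟨rfl, hu⟩ := hw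
  · exact ⟨w, hw, h.edge_of_edge hzw hne⟩
  · refine ⟨v, hv, h.edge_of_edge ((h.covered z).2 (.inr hzw)) ?_⟩
    exact fun hz => D.edge_irrefl w (hz.1 ▸ hzw)
  · have hzu : D.edge z u := ((h.covered z).1 hzw).resolve_left fun hz => hne ⟨hz, rfl⟩
    exact ⟨u, hu, h.edge_of_edge hzu fun hu => h.ne hu.2⟩

-- A ball that climbs to `u` or `v` may, after the reversal, only be able to climb to the other one.
theorem bayesBall (h : D.IsCoveredReversal D' u v) {k : Heading}
    (hw : D.BayesBall S x w k) :
    D'.BayesBall S x w k ∨ k = .up ∧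
      (w = u ∧ D'.BayesBall S x v .up ∨ w = v ∧ D'.BayesBall S x u .up) := by
  have hcov := h.symm.covered
  induction hw with
  | start => exact .inl (.start _)
  | @pass s w _ hsw hw ih =>
    have hs := ih.resolve_right nofun
    by_cases heq : s = u ∧ w = v
    · obtain ⟨rfl, rfl⟩ := heq
      exact .inl (hs.down_of_covered hcov hw)
    · exact .inl (.pass hs (h.edge_of_edge hsw heq) hw)
  | @bounce s w _ hsw hw ih =>
    have hs := ih.resolve_right nofun
    by_cases heq : s = u ∧ w = v
    · obtain ⟨rfl, rfl⟩ := heq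
      exact (hs.up_of_covered hcov hw).imp_right fun hs => ⟨rfl, .inr ⟨rfl, hs⟩⟩
    · exact .inl (.bounce hs (h.edge_of_edge hsw heq) hw)
  | @ascend s w k _ hws hw ih =>
    have hs := ih.imp_right And.right
    by_cases heq : w = u ∧ s = v
    · obtain ⟨rfl, rfl⟩ := heq
      obtain hs | hs : D'.BayesBall S x s .up ∨ D'.BayesBall S x w .up := by grind
      · cases k with
        | down =>
          obtain ⟨t, ht, htw⟩ := hs.exists_down_of_covered hcov
          exact .inl (.pass ht htw hw)
        | up => exact .inr ⟨rfl, .inl ⟨rfl, hs⟩⟩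
      · cases k with
        | down => exact .inl (hs.down hw)
        | up => exact .inl hs
    · obtain ⟨t, ht, hwt⟩ := h.exists_up hs hws heq
      exact .inl (.ascend k ht hwt hw)

theorem ballReaches (h : D.IsCoveredReversal D' u v)
    (hxy : D.BallReaches S x y) : D'.BallReaches S x y := by
  have hcov := h.symm.covered
  obtain rfl | ⟨w, _ | _, hw, hwy⟩ := hxy
  · exact .inl rfl
  · have hw := (h.bayesBall hw).resolve_right nofun
    by_cases heq : w = u ∧ y = v
    · obtain ⟨rfl, rfl⟩ := heq
      exact hw.ballReaches_of_covered hcov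
    · exact .inr ⟨w, .down, hw, h.edge_of_edge hwy heq⟩
  · have hw := (h.bayesBall hw).imp_right And.right
    by_cases heq : y = u ∧ w = v
    · obtain ⟨rfl, rfl⟩ := heq
      obtain hw | hy : D'.BayesBall S x w .up ∨ D'.BayesBall S x y .up := by grind
      · obtain ⟨t, ht, hty⟩ := hw.exists_down_of_covered hcov
        exact .inr ⟨t, .down, ht, hty⟩
      · exact hy.ballReaches
    · obtain ⟨t, ht, hyt⟩ := h.exists_up hw hwy heq
      exact .inr ⟨t, .up, ht, hyt⟩

theorem mEquiv (h : D.IsCoveredReversal D' u v) : D.MEquiv D' := fun x y S => by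
  rw [dSep_iff_not_ballReaches, dSep_iff_not_ballReaches,
    show D.BallReaches S x y ↔ D'.BallReaches S x y from ⟨h.ballReaches, h.symm.ballReaches⟩]

end IsCoveredReversal

namespace SamePattern

theorem exists_covered [Finite V] (h : D.SamePattern D') (hab : D.edge a b)
    (hab' : ¬ D'.edge a b) : ∃ u v, D.Covered u v ∧ ¬ D'.edge u v := by
  obtain ⟨y, ⟨t, hty, hty'⟩, hymin⟩ :=
    D.wellFounded_edge.has_min {y | ∃ x, D.edge x y ∧ ¬ D'.edge x y} ⟨b, a, hab, hab'⟩
  obtain ⟨x, ⟨hxy, hxy'⟩, hxmax⟩ :=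
    D.wellFounded_swap_edge.has_min {x | D.edge x y ∧ ¬ D'.edge x y} ⟨t, hty, hty'⟩
  have hagree {z w : V} (hwy : D.edge w y) (hzw : D.edge z w) : D'.edge z w :=
    by_contra fun hzw' => hymin w ⟨z, hzw, hzw'⟩ hwy
  have hyx' : D'.edge y x := ((h.adj_iff x y).1 (.inl hxy)).resolve_left hxy'
  refine ⟨x, y, fun z => ⟨fun hzy => or_iff_not_imp_left.2 fun hzx => ?_, ?_⟩, hxy'⟩
  · have hadj : D.Adj z x := by_contra fun hnadj =>
      hxy' ((h.vStructure_iff z y x).1 ⟨hzy, hxy, hzx, hnadj⟩).right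
    refine hadj.resolve_right fun hxz => ?_
    have hzy' : D'.edge z y := by_contra fun hzy' => hxmax z ⟨hzy, hzy'⟩ hxz
    exact edge_asymm (hagree hzy hxz) (edge_trans_of_adj hzy' hyx' ((h.adj_iff z x).1 hadj))
  · rintro (rfl | hzx)
    · exact hxy
    · refine edge_trans_of_adj hzx hxy (by_contra fun hnadj => ?_)
      have hzy : z ≠ y := fun heq => edge_asymm hxy (heq ▸ hzx)
      have hv : D'.VStructure z x y :=
        ⟨hagree hxy hzx, hyx', hzy, fun hadj => hnadj ((h.adj_iff z y).2 hadj)⟩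
      exact edge_asymm hxy ((h.vStructure_iff z x y).2 hv).right

theorem eq_of_edge_imp (h : D.SamePattern D') (hle : ∀ a b, D.edge a b → D'.edge a b) :
    D = D' := by
  have hedge : D.edge = D'.edge := by
    ext a b
    refine ⟨hle a b, fun hab => ?_⟩
    exact ((h.adj_iff a b).2 (.inl hab)).resolve_right fun hba => edge_asymm hab (hle b a hba)
  cases D
  cases D'
  congr

-- Reversing covered edges of `D` that disagree with `D'` transforms `D` into `D'`.
theorem mEquiv [Finite V] (h : D.SamePattern D') : D.MEquiv D' := by
  induction hn : {e : V × V | D.edge e.1 e.2 ∧ ¬ D'.edge e.1 e.2}.ncard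
    using Nat.strong_induction_on generalizing D with
  | _ n ih =>
  by_cases hle : ∀ a b, D.edge a b → D'.edge a b
  · exact h.eq_of_edge_imp hle ▸ MEquiv.refl D
  push Not at hle
  obtain ⟨a, b, hab, hab'⟩ := hle
  obtain ⟨u, v, hcov, huv'⟩ := h.exists_covered hab hab'
  obtain ⟨D₁, hrev⟩ := hcov.exists_reversal
  have hvu' : D'.edge v u := ((h.adj_iff u v).1 (.inl hcov.edge)).resolve_left huv'
  refine hrev.mEquiv.trans (ih _ ?_ (hrev.mEquiv.samePattern.symm.trans h) rfl)
  rw [← hn]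
  refine Set.ncard_lt_ncard (Set.ssubset_iff_of_subset ?_ |>.2 ?_)
  · rintro ⟨c, d⟩ ⟨hcd, hcd'⟩
    obtain ⟨rfl, rfl⟩ | hcd := (hrev.edge_iff c d).1 hcd
    exacts [absurd hvu' hcd', ⟨hcd.1, hcd'⟩]
  · exact ⟨(u, v), ⟨hcov.edge, huv'⟩, fun hmem => edge_asymm hmem.1 (hrev.symm.covered.edge)⟩

end SamePattern

/-! ### Regluing ancestral sets -/

theorem mem_ancestors_singleton : b ∈ D.ancestors {a} ↔ D.Anc b a := by
  simp [ancestors]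

/-- The edge relation of `Dag.reglue`, separated out because its acyclicity takes some lemmas. -/
def ReglueEdge (D D' : Dag V) (S : Set V) (a b : V) : Prop :=
  (a ∈ D.ancestors S ∧ b ∈ D.ancestors S ∧ D'.edge a b) ∨ (b ∉ D.ancestors S ∧ D.edge a b)

theorem anc_of_reflTransGen_reglueEdge (h : ReflTransGen (D.ReglueEdge D' S) a b)
    (hb : b ∈ D.ancestors S) : a ∈ D.ancestors S ∧ D'.Anc a b := by
  induction h using ReflTransGen.head_induction_on with
  | refl => exact ⟨hb, .refl⟩
  | head hac _ ih =>
    obtain ⟨ha, -, hac⟩ | ⟨hc, -⟩ := hac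
    exacts [⟨ha, .head hac ih.2⟩, absurd ih.1 hc]

theorem anc_of_reflTransGen_reglueEdge_of_notMem (h : ReflTransGen (D.ReglueEdge D' S) a b)
    (ha : a ∉ D.ancestors S) : D.Anc a b := by
  suffices b ∉ D.ancestors S ∧ D.Anc a b from this.2
  induction h with
  | refl => exact ⟨ha, .refl⟩
  | tail _ hcb ih =>
    obtain ⟨hc, -, -⟩ | ⟨hb, hcb⟩ := hcb
    exacts [absurd hc ih.1, ⟨hb, .tail ih.2 hcb⟩]

/-- The DAG that agrees with `D'` on edges between ancestors of `S` in `D` and with `D` on all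
other edges. -/
def reglue (D D' : Dag V) (S : Set V) : Dag V where
  edge := D.ReglueEdge D' S
  acyclic a b hab hba := by
    obtain ⟨ha, -, hab⟩ | ⟨hb, hab⟩ := hab
    · exact D'.acyclic a b hab (anc_of_reflTransGen_reglueEdge hba ha).2
    · exact D.acyclic a b hab (anc_of_reflTransGen_reglueEdge_of_notMem hba hb)

theorem reglue_edge_iff_of_mem (hb : b ∈ D.ancestors S) :
    (D.reglue D' S).edge a b ↔ a ∈ D.ancestors S ∧ D'.edge a b := by
  simp [reglue, ReglueEdge, hb]

theorem reglue_edge_iff_of_notMem (hb : b ∉ D.ancestors S) :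
    (D.reglue D' S).edge a b ↔ D.edge a b := by
  simp [reglue, ReglueEdge, hb]

theorem SamePattern.reglue (h : D.SamePattern D') (S : Set V) :
    D.SamePattern (D.reglue D' S) := by
  have hadj (a b : V) : D.Adj a b ↔ (D.reglue D' S).Adj a b := by
    have := h.adj_iff a b
    have hab : D.edge a b → b ∈ D.ancestors S → a ∈ D.ancestors S := mem_ancestors_of_edge
    have hba : D.edge b a → a ∈ D.ancestors S → b ∈ D.ancestors S := mem_ancestors_of_edge
    by_cases ha : a ∈ D.ancestors S <;> by_cases hb : b ∈ D.ancestors S <;>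
      simp_all [Adj, reglue_edge_iff_of_mem, reglue_edge_iff_of_notMem]
  refine ⟨hadj, fun a b c => ⟨fun hv => ?_, fun hv => ?_⟩⟩
  · have hnadj := (hadj a c).not.1 hv.not_adj
    by_cases hb : b ∈ D.ancestors S
    · have hv' := (h.vStructure_iff a b c).1 hv
      exact ⟨(reglue_edge_iff_of_mem hb).2 ⟨mem_ancestors_of_edge hv.left hb, hv'.left⟩,
        (reglue_edge_iff_of_mem hb).2 ⟨mem_ancestors_of_edge hv.right hb, hv'.right⟩, hv.ne, hnadj⟩
    · exact ⟨(reglue_edge_iff_of_notMem hb).2 hv.left, (reglue_edge_iff_of_notMem hb).2 hv.right,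
        hv.ne, hnadj⟩
  · have hnadj := (hadj a c).not.2 hv.not_adj
    by_cases hb : b ∈ D.ancestors S
    · exact (h.vStructure_iff a b c).2 ⟨((reglue_edge_iff_of_mem hb).1 hv.left).2,
        ((reglue_edge_iff_of_mem hb).1 hv.right).2, hv.ne, (h.adj_iff a c).not.1 hnadj⟩
    · exact ⟨(reglue_edge_iff_of_notMem hb).1 hv.left, (reglue_edge_iff_of_notMem hb).1 hv.right,
        hv.ne, hnadj⟩

theorem MEquiv.reglue [Finite V] (h : D.MEquiv D') (S : Set V) : D.MEquiv (D.reglue D' S) :=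
  (h.samePattern.reglue S).mEquiv

/-! ### Edges of the CPDAG -/

theorem CpDir.trans_of_adj (hab : D.CpDir a b) (hbc : D.CpDir b c) (hac : D.Adj a c) :
    D.CpDir a c :=
  fun D' hD' => edge_trans_of_adj (hab D' hD') (hbc D' hD') ((hD'.adj_iff a c).1 hac)

theorem VStructure.cpDir (hv : D'.VStructure a b c) (hD' : D.MEquiv D') : D.CpDir a b :=
  fun _ hD'' => ((hD'.symm.trans hD'').vStructure hv).left

/-- `E` is a DAG in the Markov equivalence class of `D` that gives `a` as few ancestors as possible.
All edges of such a DAG into `a` are directed in the CPDAG. -/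
def HasFewestAncestors (D E : Dag V) (a : V) : Prop :=
  D.MEquiv E ∧ ∀ F, D.MEquiv F → (E.ancestors {a}).ncard ≤ (F.ancestors {a}).ncard

theorem ancestors_reglue_subset :
    (D.reglue D' {a}).ancestors {a} ⊆ D.ancestors {a} ∩ D'.ancestors {a} := fun w hw => by
  have ha : a ∈ D.ancestors {a} := mem_ancestors_of_mem rfl
  have hwa := anc_of_reflTransGen_reglueEdge (mem_ancestors_singleton.1 hw) ha
  exact ⟨hwa.1, mem_ancestors_singleton.2 hwa.2⟩

theorem HasFewestAncestors.cpDir [Finite V] {E : Dag V} (hE : D.HasFewestAncestors E a)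
    (hua : E.edge u a) : D.CpDir u a := by
  intro F hF
  refine ((hF.symm.trans hE.1).adj_iff u a).2 (.inl hua) |>.resolve_right fun hau => ?_
  have hlt : ((E.reglue F {a}).ancestors {a}).ncard < (E.ancestors {a}).ncard := by
    refine Set.ncard_lt_ncard (Set.ssubset_iff_of_subset
      (ancestors_reglue_subset.trans Set.inter_subset_left) |>.2 ⟨u, ?_, fun hu => ?_⟩)
    · exact mem_ancestors_singleton.2 (.single hua)
    · exact F.acyclic a u hau (mem_ancestors_singleton.1 (ancestors_reglue_subset hu).2)
  exact (hE.2 _ (hE.1.trans ((hE.1.symm.trans hF).reglue {a}))).not_gt hlt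

theorem exists_hasFewestAncestors (D : Dag V) (a : V) : ∃ E, D.HasFewestAncestors E a := by
  obtain ⟨E, hE, hmin⟩ := WellFounded.has_min
    (InvImage.wf (fun F : Dag V => (F.ancestors {a}).ncard) Nat.lt_wfRel.wf)
    {F | D.MEquiv F} ⟨D, .refl D⟩
  exact ⟨E, hE, fun F hF => not_lt.1 (hmin F hF)⟩

theorem exists_mEquiv_agreeing_on_ancestors [Finite V] (hD' : D.MEquiv D') (a : V) :
    ∃ E, D.MEquiv E ∧ (∀ z, E.edge z a → D.CpDir z a) ∧
      ∀ z w, E.Anc w a → E.edge z w → D'.edge z w := by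
  obtain ⟨E, hE⟩ := D.exists_hasFewestAncestors a
  have hsub : (E.reglue D' {a}).ancestors {a} ⊆ E.ancestors {a} :=
    ancestors_reglue_subset.trans Set.inter_subset_left
  have hmem : D.MEquiv (E.reglue D' {a}) := hE.1.trans ((hE.1.symm.trans hD').reglue {a})
  have hfew : D.HasFewestAncestors (E.reglue D' {a}) a :=
    ⟨hmem, fun F hF => (Set.ncard_le_ncard hsub).trans (hE.2 F hF)⟩
  refine ⟨_, hmem, fun z => hfew.cpDir, fun z w hwa hzw => ?_⟩
  exact ((reglue_edge_iff_of_mem (hsub (mem_ancestors_singleton.2 hwa))).1 hzw).2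

theorem CpUndir.adj_of_cpDir (hab : D.CpUndir a b) (hca : D.CpDir c a) : D.Adj c b := by
  by_contra hnadj
  have hcb : c ≠ b := fun heq => hab.2.2 (heq ▸ hca)
  refine hab.2.1 fun F hF => ((hF.adj_iff a b).1 hab.1).resolve_right fun hba => ?_
  have hv : F.VStructure b a c :=
    ⟨hba, hca F hF, hcb.symm, fun hadj => hnadj ((hF.adj_iff c b).2 hadj.symm)⟩
  exact hab.2.2 (hv.cpDir hF)

theorem CpUndir.covered {E : Dag V} (hab : D.CpUndir a b) (hD' : D.MEquiv D') (hE : D.MEquiv E)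
    (hD'b : ∀ z, D'.edge z b → D.CpDir z b) (hEa : ∀ z, E.edge z a → D.CpDir z a)
    (hED' : ∀ z w, E.Anc w a → E.edge z w → D'.edge z w)
    (hca : D.CpDir c a) (hcb : ¬ D.CpDir c b)
    (hlast : ∀ z, D.CpDir z a → E.edge c z → D.CpDir z b) : E.Covered c a := by
  have hEab : E.edge a b := ((hE.adj_iff a b).1 hab.1).resolve_right fun hba => hab.2.2 (hEa b hba)
  have hEb {z : V} (hza : D.CpDir z a) : E.edge z b :=
    edge_trans_of_adj (hza E hE) hEab ((hE.adj_iff z b).1 (hab.adj_of_cpDir hza))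
  have hD'bc : D'.edge b c :=
    ((hD'.adj_iff c b).1 (hab.adj_of_cpDir hca)).resolve_left fun h => hcb (hD'b c h)
  refine fun z => ⟨fun hza => or_iff_not_imp_left.2 fun hzc => ?_, ?_⟩
  · have hza' := hEa z hza
    have hadj : E.Adj z c := by_contra fun hnadj =>
      hcb ((VStructure.mk (hEb hca) (hEb hza') (Ne.symm hzc) fun h => hnadj h.symm).cpDir hE)
    refine hadj.resolve_right fun hcz => ?_
    have hD'zc : D'.edge z c := edge_trans_of_adj (hlast z hza' hcz D' hD') hD'bc
      ((hD'.adj_iff z c).1 ((hE.adj_iff z c).2 hadj))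
    exact edge_asymm hD'zc (hED' c z (.single hza) hcz)
  · rintro (rfl | hzc)
    · exact hca E hE
    refine edge_trans_of_adj hzc (hca E hE) (by_contra fun hza => ?_)
    have hbz : b ≠ z := fun heq => edge_asymm (hEb hca) (heq ▸ hzc)
    have hadj : D.Adj b z := by_contra fun hnadj => by
      have hv : D'.VStructure b c z :=
        ⟨hD'bc, hED' z c (.single (hca E hE)) hzc, hbz, (hD'.adj_iff b z).not.1 hnadj⟩
      exact edge_asymm (hEb hca) (hv.cpDir hD' E hE)
    have hzb : E.edge z b := edge_trans_of_adj hzc (hEb hca) ((hE.adj_iff z b).1 hadj.symm)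
    have haz : a ≠ z := fun heq => edge_asymm (hca E hE) (heq ▸ hzc)
    exact hab.2.1 ((VStructure.mk hEab hzb haz fun h => hza h.symm).cpDir hE)

-- If this failed, then a last node violating it, in a suitable member of the class, would have a
-- covered edge to `a`, which could be reversed.
theorem CpDir.of_cpUndir [Finite V] (hca : D.CpDir c a) (hab : D.CpUndir a b) : D.CpDir c b := by
  by_contra hcb
  obtain ⟨D', hD'⟩ := D.exists_hasFewestAncestors b
  obtain ⟨E, hE, hEa, hED'⟩ := exists_mEquiv_agreeing_on_ancestors hD'.1 a
  obtain ⟨t, ⟨hta, htb⟩, hlast⟩ := E.wellFounded_swap_edge.has_min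
    {t | D.CpDir t a ∧ ¬ D.CpDir t b} ⟨c, hca, hcb⟩
  have hcov : E.Covered t a := hab.covered hD'.1 hE (fun _ => hD'.cpDir) hEa hED' hta htb
    fun z hza htz => by_contra fun hzb => hlast z ⟨hza, hzb⟩ htz
  obtain ⟨F, hF⟩ := hcov.exists_reversal
  exact edge_asymm hF.symm.covered.edge (hta F (hE.trans hF.mEquiv))

theorem CpDir.of_not_cpDir_of_adj [Finite V] (hca : D.CpDir c a) (hab : D.Adj a b)
    (hcb : D.Adj c b) (hba : ¬ D.CpDir b a) : D.CpDir c b := by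
  by_cases h : D.CpDir a b
  · exact hca.trans_of_adj h hcb
  · exact hca.of_cpUndir ⟨hab, h, hba⟩

end Dag

namespace GPath

variable {A : V → V → Prop} {x y : V}

theorem exists_shortcut {R : V → V → Prop} (p : GPath A x y)
    (hR : ∀ i : Fin p.n, R (p.f i.castSucc) (p.f i.succ)) {i : ℕ} (hi : i + 2 ≤ p.n)
    (hA : A (p.f ⟨i, by omega⟩) (p.f ⟨i + 2, by omega⟩))
    (hR' : R (p.f ⟨i, by omega⟩) (p.f ⟨i + 2, by omega⟩)) :
    ∃ q : GPath A x y, q.n + 1 = p.n ∧ ∀ j : Fin q.n, R (q.f j.castSucc) (q.f j.succ) := by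
  obtain ⟨m, hm⟩ : ∃ m, p.n = m + 1 := Nat.exists_eq_add_of_le' (by omega)
  obtain ⟨n, f, hinj, hx, hy, hadj⟩ := p
  obtain rfl : n = m + 1 := hm
  change i + 2 ≤ m + 1 at hi
  let k : Fin (m + 2) := ⟨i + 1, by omega⟩
  have hbefore (j : Fin (m + 1)) (hj : j.val ≤ i) : k.succAbove j = j.castSucc :=
    Fin.succAbove_of_castSucc_lt k j (Nat.lt_succ_of_le hj)
  have hafter (j : Fin (m + 1)) (hj : i < j.val) : k.succAbove j = j.succ :=
    Fin.succAbove_of_le_castSucc k j hj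
  have hstep (P : V → V → Prop) (hP : ∀ j : Fin (m + 1), P (f j.castSucc) (f j.succ))
      (hP' : P (f ⟨i, by omega⟩) (f ⟨i + 2, by omega⟩)) (j : Fin m) :
      P (f (k.succAbove j.castSucc)) (f (k.succAbove j.succ)) := by
    rcases lt_trichotomy j.val i with hj | hj | hj
    · rw [hbefore _ hj.le, hbefore j.succ hj]
      exact hP j.castSucc
    · subst hj
      rw [hbefore _ le_rfl, hafter _ (Nat.lt_succ_self _)]
      exact hP'
    · rw [hafter _ hj, hafter _ (Nat.lt_succ_of_lt hj)]
      exact hP j.succ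
  refine ⟨⟨m, f ∘ k.succAbove, hinj.comp Fin.succAbove_right_injective, ?_, ?_,
    hstep A hadj hA⟩, rfl, hstep R hR hR'⟩
  · exact (congrArg f (hbefore _ i.zero_le)).trans hx
  · exact (congrArg f (hafter _ (by dsimp only; omega))).trans hy

end GPath

/-- If `p` is a possibly directed path from `X` to `Y` in the CPDAG `G` of
the MEC of a DAG whose number of edges is minimal among all possibly directed paths from
`X` to `Y` in `G`, then `p` is unshielded. -/
theorem shortest_possiblyDirected_path_unshielded
    {V : Type*} [Fintype V] (D : Dag V) (X Y : V) (hXY : X ≠ Y)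
    (p : GPath D.Adj X Y) (hp : p.CpPossiblyDirected)
    (hmin : ∀ q : GPath D.Adj X Y, q.CpPossiblyDirected → p.n ≤ q.n) :
    p.Unshielded := by
  intro i hi hadj
  have hp₁ := hp ⟨i, by omega⟩
  have hp₂ := hp ⟨i + 1, by omega⟩
  by_cases hback : D.CpDir (p.f ⟨i + 2, by omega⟩) (p.f ⟨i, by omega⟩)
  · exact hp₂ (hback.of_not_cpDir_of_adj (p.adj ⟨i, by omega⟩) (p.adj ⟨i + 1, by omega⟩).symm hp₁)
  · obtain ⟨q, hqp, hq⟩ := p.exists_shortcut (R := fun a b => ¬ D.CpDir b a) hp hi hadj hback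
    have := hmin q hq
    omega
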